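/- Let (a,b) ∈ ℂ², let g : ℂ × ℂ → ℂ be analytic on a neighborhood of (a,b), and assume g(a,b) ≠ 0, g(a,b) ≠ 1, g^{(1,0)}(a,b) ≠ 0, g^{(0,1)}(a,b) = 0 and g^{(0,2)}(a,b) ≠ 0. Then for all m, n ∈ ℕ there exists a polynomial p ∈ ℂ[X] of degree exactly m+n such that for every natural number i > m+2n, the mixed partial derivative of order (m,2n) at (a,b) of the function (x,y) ↦ (g(x,y))^i equals (g(a,b))^i · p(i). -/

import Mathlib

/-!
Since `∂(g ^ i) = i * (∂g / g) * g ^ i` for a first-order partial `∂`, the Leibniz rule expresses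
every mixed derivative of `g ^ i` at `(a, b)` through lower ones. With `u = ∂_y g / g`,

`∂_x^m ∂_y^(k+1) (g^i) = i * ∑_{q ≤ k} ∑_{p ≤ m} C(k,q) C(m,p) (∂_x^p ∂_y^q u) (∂_x^(m-p) ∂_y^(k-q) (g^i))`,

and the analogous one-variable recursion holds for `k = 0`. By induction each mixed derivative is
`g(a,b)^i` times a polynomial in `i` of degree at most `m + ⌊k/2⌋`: the term `p = q = 0`, the only
one that could break this bound, has the factor `u(a,b) = 0`. When `k + 1` is even, the only term
that reaches the top degree is `(p, q) = (0, 1)`, with factor `k * ∂_y u(a,b) = k * g_yy / g ≠ 0`;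
for `k = 0` the top coefficient of order `m` is `(g_x / g)^m`. So the coefficient of degree `m + n`
in order `(m, 2n)` does not vanish (`mixedDeriv_even`).
-/

open Filter Topology

/-- The partial derivative of `f` in its second variable. -/
noncomputable def partialY (f : ℂ × ℂ → ℂ) (z : ℂ × ℂ) : ℂ :=
  deriv (fun y => f (z.1, y)) z.2

/-- The mixed partial derivative `∂_x^m ∂_y^k f` at `(a, b)`. -/
noncomputable def mixedDeriv (a b : ℂ) (m k : ℕ) (f : ℂ × ℂ → ℂ) : ℂ :=
  iteratedDeriv m (fun x => iteratedDeriv k (fun y => f (x, y)) b) a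

/-- The sequence `f` has the form `f i = G ^ i * p(i)` for a polynomial `p` of degree at most `d`
whose coefficient in degree `d` is `c` (possibly zero). -/
def HasTop (G : ℂ) (d : ℕ) (c : ℂ) (f : ℕ → ℂ) : Prop :=
  ∃ p : Polynomial ℂ, p.natDegree ≤ d ∧ p.coeff d = c ∧ ∀ i : ℕ, f i = G ^ i * p.eval (i : ℂ)

namespace HasTop

variable {G : ℂ}

lemma sum {ι : Type*} {d : ℕ} (s : Finset ι) {c : ι → ℂ} {f : ι → ℕ → ℂ}
    (h : ∀ j ∈ s, HasTop G d (c j) (f j)) :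
    HasTop G d (∑ j ∈ s, c j) (fun i => ∑ j ∈ s, f j i) := by
  classical
  induction s using Finset.induction_on with
  | empty => exact ⟨0, by simp, by simp, by simp⟩
  | insert j s hj ih =>
    obtain ⟨p, hp, hpc, hpe⟩ := ih fun l hl => h l (Finset.mem_insert_of_mem hl)
    obtain ⟨q, hq, hqc, hqe⟩ := h j (Finset.mem_insert_self j s)
    refine ⟨q + p, Polynomial.natDegree_add_le_of_degree_le hq hp, ?_, fun i => ?_⟩
    · rw [Finset.sum_insert hj, Polynomial.coeff_add, hpc, hqc]
    · have hpi : ∑ l ∈ s, f l i = G ^ i * p.eval (i : ℂ) := hpe i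
      simp only [Finset.sum_insert hj, hqe, hpi, Polynomial.eval_add]
      ring

lemma const_mul {d : ℕ} {c : ℂ} {f : ℕ → ℂ} (r : ℂ) (h : HasTop G d c f) :
    HasTop G d (r * c) (fun i => r * f i) := by
  obtain ⟨p, hp, hc, he⟩ := h
  refine ⟨Polynomial.C r * p, (Polynomial.natDegree_C_mul_le _ _).trans hp, by simp [hc],
    fun i => ?_⟩
  simp only [he, Polynomial.eval_mul, Polynomial.eval_C]; ring

lemma index_mul {d : ℕ} {c : ℂ} {f : ℕ → ℂ} (h : HasTop G d c f) :
    HasTop G (d + 1) c (fun i => i * f i) := by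
  obtain ⟨p, hp, hc, he⟩ := h
  refine ⟨Polynomial.X * p, ?_, by simp [hc], fun i => ?_⟩
  · refine Polynomial.natDegree_mul_le.trans ?_
    have := Polynomial.natDegree_X_le (R := ℂ)
    omega
  · simp only [he, Polynomial.eval_mul, Polynomial.eval_X]; ring

lemma of_lt {d e : ℕ} {c : ℂ} {f : ℕ → ℂ} (h : HasTop G d c f) (hde : d < e) :
    HasTop G e 0 f := by
  obtain ⟨p, hp, _, he⟩ := h
  exact ⟨p, hp.trans hde.le, Polynomial.coeff_eq_zero_of_natDegree_lt (hp.trans_lt hde), he⟩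

lemma of_le {d e : ℕ} {c : ℂ} {f : ℕ → ℂ} (h : HasTop G d c f) (hde : d ≤ e) :
    ∃ c', HasTop G e c' f := by
  rcases hde.eq_or_lt with rfl | hlt
  · exact ⟨c, h⟩
  · exact ⟨0, h.of_lt hlt⟩

lemma zero (d : ℕ) : HasTop G d 0 (fun _ => 0) := ⟨0, by simp, by simp, by simp⟩

end HasTop

lemma analyticAt_partialY {f : ℂ × ℂ → ℂ} {z : ℂ × ℂ} (hf : AnalyticAt ℂ f z) :
    AnalyticAt ℂ (partialY f) z := by
  have h : AnalyticAt ℂ (fun w => fderiv ℂ f w (0, 1)) z :=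
    ((ContinuousLinearMap.apply ℂ ℂ ((0, 1) : ℂ × ℂ)).analyticAt _).comp hf.fderiv
  refine h.congr ?_
  filter_upwards [hf.eventually_analyticAt] with w hw
  have h1 : HasDerivAt (fun y : ℂ => (w.1, y)) ((0, 1) : ℂ × ℂ) w.2 :=
    (hasDerivAt_const _ _).prodMk (hasDerivAt_id _)
  have h2 : HasFDerivAt f (fderiv ℂ f w) (w.1, w.2) := hw.differentiableAt.hasFDerivAt
  exact (h2.comp_hasDerivAt w.2 h1).deriv.symm

lemma iteratedDeriv_eq_partialY (f : ℂ × ℂ → ℂ) (k : ℕ) (x y : ℂ) :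
    iteratedDeriv k (fun y => f (x, y)) y = (partialY^[k] f) (x, y) := by
  induction k generalizing y with
  | zero => simp
  | succ k ih =>
    rw [iteratedDeriv_succ, Function.iterate_succ_apply']
    simp only [partialY]
    congr 1
    exact funext ih

lemma analyticAt_iterate_partialY {f : ℂ × ℂ → ℂ} {z : ℂ × ℂ} (hf : AnalyticAt ℂ f z) (k : ℕ) :
    AnalyticAt ℂ (partialY^[k] f) z := by
  induction k with
  | zero => exact hf
  | succ k ih => rw [Function.iterate_succ_apply']; exact analyticAt_partialY ih

lemma analyticAt_iteratedDeriv {f : ℂ × ℂ → ℂ} {a b : ℂ} (hf : AnalyticAt ℂ f (a, b)) (k : ℕ) :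
    AnalyticAt ℂ (fun x => iteratedDeriv k (fun y => f (x, y)) b) a := by
  simp only [iteratedDeriv_eq_partialY]
  exact (analyticAt_iterate_partialY hf k).curry_left

lemma mixedDeriv_congr {f h : ℂ × ℂ → ℂ} {a b : ℂ} (m k : ℕ) (hfh : f =ᶠ[𝓝 (a, b)] h) :
    mixedDeriv a b m k f = mixedDeriv a b m k h := by
  refine EventuallyEq.iteratedDeriv_eq m ?_
  filter_upwards [hfh.curry_nhds] with x hx
  exact EventuallyEq.iteratedDeriv_eq k hx

lemma mixedDeriv_succ (f : ℂ × ℂ → ℂ) (a b : ℂ) (m k : ℕ) :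
    mixedDeriv a b m (k + 1) f = mixedDeriv a b m k (partialY f) := by
  simp only [mixedDeriv, iteratedDeriv_succ']
  rfl

lemma mixedDeriv_const_mul (f : ℂ × ℂ → ℂ) (a b c : ℂ) (m k : ℕ) :
    mixedDeriv a b m k (fun z => c * f z) = c * mixedDeriv a b m k f := by
  simp only [mixedDeriv, iteratedDeriv_const_mul_field]

/-- The Leibniz rule for mixed partial derivatives. -/
lemma mixedDeriv_mul {f h : ℂ × ℂ → ℂ} {a b : ℂ} (hf : AnalyticAt ℂ f (a, b))
    (hh : AnalyticAt ℂ h (a, b)) (m k : ℕ) :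
    mixedDeriv a b m k (fun z => f z * h z) =
      ∑ q ∈ Finset.range (k + 1), ∑ p ∈ Finset.range (m + 1),
        (k.choose q * (m.choose p * mixedDeriv a b p q f)) *
          mixedDeriv a b (m - p) (k - q) h := by
  have key : (fun x => iteratedDeriv k (fun y => f (x, y) * h (x, y)) b) =ᶠ[𝓝 a]
      fun x => ∑ q ∈ Finset.range (k + 1), (k.choose q : ℂ) *
        ((fun x => iteratedDeriv q (fun y => f (x, y)) b) *
          (fun x => iteratedDeriv (k - q) (fun y => h (x, y)) b)) x := by
    have hc : Tendsto (fun x : ℂ => (x, b)) (𝓝 a) (𝓝 (a, b)) :=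
      (Continuous.prodMk_left b).tendsto a
    filter_upwards [hc.eventually hf.eventually_analyticAt,
      hc.eventually hh.eventually_analyticAt] with x hfx hhx
    have := iteratedDeriv_mul (n := k) (f := fun y => f (x, y)) (g := fun y => h (x, y)) (x := b)
      hfx.curry_right.contDiffAt hhx.curry_right.contDiffAt
    refine Eq.trans this (Finset.sum_congr rfl fun q _ => ?_)
    simp [mul_assoc]
  have hF := fun q => analyticAt_iteratedDeriv hf q
  have hH := fun q => analyticAt_iteratedDeriv hh q
  rw [mixedDeriv, key.iteratedDeriv_eq, iteratedDeriv_fun_sum]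
  · refine Finset.sum_congr rfl fun q _ => ?_
    rw [iteratedDeriv_const_mul_field,
      iteratedDeriv_mul (hF q).contDiffAt (hH (k - q)).contDiffAt, Finset.mul_sum]
    refine Finset.sum_congr rfl fun p _ => ?_
    simp only [mixedDeriv]
    ring
  · intro q _
    exact (analyticAt_const.mul ((hF q).mul (hH (k - q)))).contDiffAt

lemma deriv_pow_eq {f : ℂ → ℂ} {x : ℂ} (hf : DifferentiableAt ℂ f x) (hx : f x ≠ 0) (i : ℕ) :
    deriv (fun x => f x ^ i) x = i * (deriv f x / f x * f x ^ i) := by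
  rw [deriv_fun_pow hf]
  cases i with
  | zero => simp
  | succ i => simp only [Nat.add_sub_cancel, pow_succ]; field_simp

lemma mixedDeriv_pow_succ {g : ℂ × ℂ → ℂ} {a b : ℂ} (hg : AnalyticAt ℂ g (a, b))
    (h0 : g (a, b) ≠ 0) (m k i : ℕ) :
    mixedDeriv a b m (k + 1) (fun z => g z ^ i) =
      ∑ q ∈ Finset.range (k + 1), ∑ p ∈ Finset.range (m + 1),
        (k.choose q * (m.choose p * mixedDeriv a b p q (fun z => partialY g z / g z))) *
          (i * mixedDeriv a b (m - p) (k - q) (fun z => g z ^ i)) := by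
  have key : partialY (fun z => g z ^ i) =ᶠ[𝓝 (a, b)]
      fun z => i * (partialY g z / g z * g z ^ i) := by
    filter_upwards [hg.eventually_analyticAt, hg.continuousAt.eventually_ne h0] with z hz hz0
    exact deriv_pow_eq (f := fun y => g (z.1, y)) hz.curry_right.differentiableAt hz0 i
  have hu : AnalyticAt ℂ (fun z => partialY g z / g z) (a, b) := (analyticAt_partialY hg).div hg h0
  have hgi : AnalyticAt ℂ (fun z => g z ^ i) (a, b) := hg.pow i
  rw [mixedDeriv_succ, mixedDeriv_congr m k key, mixedDeriv_const_mul,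
    mixedDeriv_mul hu hgi]
  simp only [Finset.mul_sum]
  refine Finset.sum_congr rfl fun q _ => Finset.sum_congr rfl fun p _ => ?_
  ring

lemma iteratedDeriv_pow_succ {f : ℂ → ℂ} {a : ℂ} (hf : AnalyticAt ℂ f a) (h0 : f a ≠ 0)
    (m i : ℕ) :
    iteratedDeriv (m + 1) (fun x => f x ^ i) a =
      ∑ p ∈ Finset.range (m + 1),
        (m.choose p * iteratedDeriv p (fun x => deriv f x / f x) a) *
          (i * iteratedDeriv (m - p) (fun x => f x ^ i) a) := by
  have key : deriv (fun x => f x ^ i) =ᶠ[𝓝 a]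
      fun x => i * ((fun x => deriv f x / f x) * (fun x => f x ^ i)) x := by
    filter_upwards [hf.eventually_analyticAt, hf.continuousAt.eventually_ne h0] with z hz hz0
    exact deriv_pow_eq hz.differentiableAt hz0 i
  have hu : AnalyticAt ℂ (fun x => deriv f x / f x) a := hf.deriv.div hf h0
  have hfi : AnalyticAt ℂ (fun x => f x ^ i) a := hf.pow i
  rw [iteratedDeriv_succ', key.iteratedDeriv_eq, iteratedDeriv_const_mul_field,
    iteratedDeriv_mul hu.contDiffAt hfi.contDiffAt, Finset.mul_sum]
  refine Finset.sum_congr rfl fun p _ => ?_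
  ring

/-- The top coefficient of the `m`-th derivative of `f ^ i` comes from differentiating a new
factor every time. -/
lemma iteratedDeriv_pow_hasTop {f : ℂ → ℂ} {a : ℂ} (hf : AnalyticAt ℂ f a) (h0 : f a ≠ 0)
    (m : ℕ) :
    HasTop (f a) m ((deriv f a / f a) ^ m) (fun i => iteratedDeriv m (fun x => f x ^ i) a) := by
  induction m using Nat.strong_induction_on with
  | _ m ih =>
    cases m with
    | zero => exact ⟨1, by simp, by simp, by simp⟩
    | succ m =>
      simp only [iteratedDeriv_pow_succ hf h0]
      have := HasTop.sum (G := f a) (d := m + 1) (Finset.range (m + 1))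
        (c := fun p => if p = 0 then (deriv f a / f a) ^ (m + 1) else 0)
        (f := fun p i => (m.choose p * iteratedDeriv p (fun x => deriv f x / f x) a) *
          (i * iteratedDeriv (m - p) (fun x => f x ^ i) a)) ?_
      · simpa using this
      · intro p hp
        have hpm : p ≤ m := by simpa [Nat.lt_succ_iff] using hp
        have h := (ih (m - p) (by omega)).index_mul
        by_cases hp0 : p = 0
        · subst hp0
          have h' := h.const_mul (deriv f a / f a)
          rw [← pow_succ'] at h'
          simpa using h'
        · rw [if_neg hp0]
          simpa using (h.of_lt (e := m + 1) (by omega)).const_mul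
            (m.choose p * iteratedDeriv p (fun x => deriv f x / f x) a)

/-- The degree bound. The vanishing of `∂_y g (a, b)` is what allows only one power of `i` for two
derivatives in `y`. -/
lemma mixedDeriv_bound {g : ℂ × ℂ → ℂ} {a b : ℂ} (hg : AnalyticAt ℂ g (a, b))
    (h0 : g (a, b) ≠ 0) (h01 : partialY g (a, b) = 0) (k m : ℕ) :
    ∃ c, HasTop (g (a, b)) (m + k / 2) c (fun i => mixedDeriv a b m k (fun z => g z ^ i)) := by
  induction k using Nat.strong_induction_on generalizing m with
  | _ k ih =>
    cases k with
    | zero => exact ⟨_, iteratedDeriv_pow_hasTop hg.curry_left h0 m⟩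
    | succ k =>
      simp only [mixedDeriv_pow_succ hg h0]
      have key : ∀ q p, ∃ c, q ∈ Finset.range (k + 1) → p ∈ Finset.range (m + 1) →
          HasTop (g (a, b)) (m + (k + 1) / 2) c (fun i =>
            (k.choose q * (m.choose p * mixedDeriv a b p q (fun z => partialY g z / g z))) *
              (i * mixedDeriv a b (m - p) (k - q) (fun z => g z ^ i))) := by
        intro q p
        by_cases hqp : q ∈ Finset.range (k + 1) ∧ p ∈ Finset.range (m + 1)
        · have hq := Finset.mem_range.mp hqp.1
          have hp := Finset.mem_range.mp hqp.2
          by_cases h00 : q = 0 ∧ p = 0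
          · obtain ⟨rfl, rfl⟩ := h00
            refine ⟨0, fun _ _ => ?_⟩
            simpa [mixedDeriv, h01] using HasTop.zero (G := g (a, b)) (m + (k + 1) / 2)
          · obtain ⟨c, hc⟩ := ih (k - q) (by omega) (m - p)
            obtain ⟨c', hc'⟩ := hc.index_mul.of_le (e := m + (k + 1) / 2) (by omega)
            exact ⟨_, fun _ _ => hc'.const_mul _⟩
        · exact ⟨0, fun h h' => absurd ⟨h, h'⟩ hqp⟩
      choose c hc using key
      exact ⟨_, HasTop.sum _ fun q hq => HasTop.sum _ fun p hp => hc q p hq hp⟩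

/-- For even order in `y` the coefficient in the extremal degree is nonzero. -/
lemma mixedDeriv_even {g : ℂ × ℂ → ℂ} {a b : ℂ} (hg : AnalyticAt ℂ g (a, b))
    (h0 : g (a, b) ≠ 0) (h10 : deriv (fun x => g (x, b)) a ≠ 0)
    (h01 : partialY g (a, b) = 0)
    (hu : mixedDeriv a b 0 1 (fun z => partialY g z / g z) ≠ 0) (m n : ℕ) :
    ∃ c, c ≠ 0 ∧
      HasTop (g (a, b)) (m + n) c (fun i => mixedDeriv a b m (2 * n) (fun z => g z ^ i)) := by
  induction n with
  | zero =>
    exact ⟨_, pow_ne_zero m (div_ne_zero h10 h0), iteratedDeriv_pow_hasTop hg.curry_left h0 m⟩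
  | succ n ih =>
    obtain ⟨c, hc0, hc⟩ := ih
    set w := mixedDeriv a b 0 1 (fun z => partialY g z / g z) with hw
    refine ⟨((2 * n + 1 : ℕ) : ℂ) * w * c,
      mul_ne_zero (mul_ne_zero (Nat.cast_ne_zero.mpr (by omega)) hu) hc0, ?_⟩
    simp only [show 2 * (n + 1) = (2 * n + 1) + 1 by ring, mixedDeriv_pow_succ hg h0]
    have key : ∀ q ∈ Finset.range (2 * n + 1 + 1), ∀ p ∈ Finset.range (m + 1),
        HasTop (g (a, b)) (m + (n + 1))
          (if q = 1 then if p = 0 then ((2 * n + 1 : ℕ) : ℂ) * w * c else 0 else 0) (fun i =>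
          ((2 * n + 1).choose q *
            (m.choose p * mixedDeriv a b p q (fun z => partialY g z / g z))) *
            (i * mixedDeriv a b (m - p) (2 * n + 1 - q) (fun z => g z ^ i))) := by
      intro q hq p hp
      have hq := Finset.mem_range.mp hq
      have hp := Finset.mem_range.mp hp
      by_cases h00 : q = 0 ∧ p = 0
      · obtain ⟨rfl, rfl⟩ := h00
        simpa [mixedDeriv, h01] using HasTop.zero (G := g (a, b)) (m + (n + 1))
      by_cases h1 : q = 1 ∧ p = 0
      · obtain ⟨rfl, rfl⟩ := h1
        simpa [← hw, ← add_assoc] using hc.index_mul.const_mul (((2 * n + 1 : ℕ) : ℂ) * w)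
      · obtain ⟨c', hc'⟩ := mixedDeriv_bound hg h0 h01 (2 * n + 1 - q) (m - p)
        have h := (hc'.index_mul.of_lt (e := m + (n + 1)) (by omega)).const_mul
          ((2 * n + 1).choose q *
            (m.choose p * mixedDeriv a b p q (fun z => partialY g z / g z)))
        rw [mul_zero] at h
        rw [← ite_and, if_neg h1]
        exact h
    have := HasTop.sum _ fun q hq => HasTop.sum _ fun p hp => key q hq p hp
    simpa using this

/-- If `g : ℂ × ℂ → ℂ` is analytic near `(a,b)` with `g (a,b) ≠ 0, 1`,
`g^{(1,0)}(a,b) ≠ 0`, `g^{(0,1)}(a,b) = 0` and `g^{(0,2)}(a,b) ≠ 0`, then for all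
`m, n` there is a polynomial `p` of degree exactly `m + n` with
`∂_x^m ∂_y^{2n} (g(x,y))^i |_{(a,b)} = (g (a,b))^i * p(i)` for all `i > m + 2n`. -/
theorem mixed_even_deriv_of_power_is_poly
    (a b : ℂ) (g : ℂ × ℂ → ℂ) (hg : AnalyticAt ℂ g (a, b))
    (h0 : g (a, b) ≠ 0) (h1 : g (a, b) ≠ 1)
    (h10 : deriv (fun x => g (x, b)) a ≠ 0)
    (h01 : deriv (fun y => g (a, y)) b = 0)
    (h02 : iteratedDeriv 2 (fun y => g (a, y)) b ≠ 0) (m n : ℕ) :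
    ∃ p : Polynomial ℂ, p.degree = (m + n : ℕ) ∧
      ∀ i : ℕ, m + 2 * n < i →
        iteratedDeriv m (fun x => iteratedDeriv (2 * n) (fun y => (g (x, y)) ^ i) b) a
          = (g (a, b)) ^ i * p.eval (i : ℂ) := by
  have hu : mixedDeriv a b 0 1 (fun z => partialY g z / g z) ≠ 0 := by
    have hgy : AnalyticAt ℂ (fun y => g (a, y)) b := hg.curry_right
    have hd : deriv (fun y => deriv (fun y => g (a, y)) y / g (a, y)) b =
        iteratedDeriv 2 (fun y => g (a, y)) b / g (a, b) := by
      rw [deriv_fun_div hgy.deriv.differentiableAt hgy.differentiableAt h0, h01, iteratedDeriv_succ,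
        iteratedDeriv_one]
      field_simp
      ring
    simp only [mixedDeriv, iteratedDeriv_zero, iteratedDeriv_one, partialY]
    rw [hd]
    exact div_ne_zero h02 h0
  obtain ⟨c, hc0, p, hp, hpc, hpe⟩ := mixedDeriv_even hg h0 h10 h01 hu m n
  refine ⟨p, ?_, fun i _ => hpe i⟩
  refine le_antisymm (Polynomial.natDegree_le_iff_degree_le.mp hp) ?_
  exact Polynomial.le_degree_of_ne_zero (by rwa [hpc])
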